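/- Let n ∈ ℕ and let a₁, …, aₙ be positive real numbers. Then for (Lebesgue) almost every α > 3n + 4, the equation y = a₁x₁ + ⋯ + aₙxₙ has at most finitely many non-trivial solutions (y, x₁, …, xₙ) ∈ PS(α)^{n+1}. -/

import Mathlib

open MeasureTheory

/-- The Piatetski–Shapiro set `PS(α) = {⌊n^α⌋ : n ∈ ℕ, n ≥ 1}`. -/
def PS (α : ℝ) : Set ℤ := {m : ℤ | ∃ n : ℕ, 1 ≤ n ∧ m = ⌊(n : ℝ) ^ α⌋}

lemma phi_aux (t δ : ℝ) (h : Real.exp t - 1 - t ≤ δ) (hδ : δ < 1/4) : t ^ 2 ≤ 4 * δ := by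
  by_cases ht : -2 ≤ t
  · have h1 := Real.add_one_le_exp (t/2)
    have h2 : Real.exp t = Real.exp (t/2) * Real.exp (t/2) := by
      rw [← Real.exp_add]; congr 1; ring
    nlinarith
  · push Not at ht
    have := Real.exp_pos t
    linarith

lemma sep_aux {n : ℕ} (a b : Fin n → ℝ) (ha : ∀ i, 0 < a i) (p q ε c : ℝ)
    (hp : |∑ i, a i * Real.exp (b i * p) - 1| ≤ ε)
    (hq : |∑ i, a i * Real.exp (b i * q) - 1| ≤ ε)
    (hd : 0 ≤ (∑ i, a i * b i * Real.exp (b i * p)) * (q - p))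
    (i : Fin n) (hc : 0 < c) (hi : c ≤ a i * Real.exp (b i * p)) (hε : 8 * ε < c) :
    (b i * (q - p)) ^ 2 ≤ 8 * ε / c := by
  have hid : ∑ j, a j * Real.exp (b j * p) * (Real.exp (b j * (q - p)) - 1 - b j * (q - p))
      = ∑ j, a j * Real.exp (b j * q) - ∑ j, a j * Real.exp (b j * p)
        - (∑ j, a j * b j * Real.exp (b j * p)) * (q - p) := by
    rw [Finset.sum_mul, ← Finset.sum_sub_distrib, ← Finset.sum_sub_distrib]
    refine Finset.sum_congr rfl fun j _ => ?_
    have : Real.exp (b j * q) = Real.exp (b j * p) * Real.exp (b j * (q - p)) := by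
      rw [← Real.exp_add]; congr 1; ring
    rw [this]; ring
  have hnn : ∀ j, 0 ≤ Real.exp (b j * (q - p)) - 1 - b j * (q - p) := fun j => by
    have := Real.add_one_le_exp (b j * (q - p)); linarith
  have hle : a i * Real.exp (b i * p) * (Real.exp (b i * (q - p)) - 1 - b i * (q - p)) ≤ 2 * ε := by
    have h1 := Finset.single_le_sum
      (f := fun j => a j * Real.exp (b j * p) * (Real.exp (b j * (q - p)) - 1 - b j * (q - p)))
      (s := Finset.univ)
      (fun j _ => mul_nonneg (mul_nonneg (ha j).le (Real.exp_pos _).le) (hnn j)) (Finset.mem_univ i)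
    rw [hid] at h1
    have h2 := abs_le.1 hp
    have h3 := abs_le.1 hq
    linarith
  have h4 : Real.exp (b i * (q - p)) - 1 - b i * (q - p) ≤ 2 * ε / c := by
    rw [le_div_iff₀ hc]
    have := mul_le_mul_of_nonneg_right hi (hnn i)
    linarith
  have h5 := phi_aux _ _ h4 (by rw [div_lt_iff₀ hc]; linarith)
  calc _ ≤ _ := h5
    _ = _ := by ring

lemma diam_aux (S : Set ℝ) (G : ℝ → ℝ) (D : ℝ)
    (h : ∀ p ∈ S, ∀ q ∈ S, 0 ≤ G p * (q - p) → |q - p| ≤ D) :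
    volume S ≤ ENNReal.ofReal D + ENNReal.ofReal D := by
  have hS : S ⊆ (S ∩ {x | 0 ≤ G x}) ∪ (S ∩ {x | G x < 0}) := by
    intro x hx
    rcases le_or_gt 0 (G x) with h0 | h0
    · exact Or.inl ⟨hx, h0⟩
    · exact Or.inr ⟨hx, h0⟩
  refine (measure_mono hS).trans ((measure_union_le _ _).trans (add_le_add ?_ ?_))
  · refine (Real.volume_le_diam _).trans (Metric.ediam_le ?_)
    rintro x ⟨hx, hx0⟩ y ⟨hy, hy0⟩
    rw [edist_dist, Real.dist_eq]
    refine ENNReal.ofReal_le_ofReal ?_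
    simp only [Set.mem_ofPred_eq] at hx0 hy0
    rcases le_total x y with hxy | hxy
    · rw [abs_sub_comm]; exact h x hx y hy (mul_nonneg hx0 (by linarith))
    · exact h y hy x hx (mul_nonneg hy0 (by linarith))
  · refine (Real.volume_le_diam _).trans (Metric.ediam_le ?_)
    rintro x ⟨hx, hx0⟩ y ⟨hy, hy0⟩
    rw [edist_dist, Real.dist_eq]
    refine ENNReal.ofReal_le_ofReal ?_
    simp only [Set.mem_ofPred_eq] at hx0 hy0
    rcases le_total x y with hxy | hxy
    · exact h y hy x hx (mul_nonneg_of_nonpos_of_nonpos hy0.le (by linarith))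
    · rw [abs_sub_comm]; exact h x hx y hy (mul_nonneg_of_nonpos_of_nonpos hx0.le (by linarith))

lemma log_aux (k m : ℕ) (hk : 1 ≤ k) (hm : 1 ≤ m) (hne : k ≠ m) :
    1 / (2 * m : ℝ) ≤ |Real.log ((k : ℝ) / m)| := by
  have hm0 : (0:ℝ) < m := by exact_mod_cast hm
  have hk0 : (0:ℝ) < k := by exact_mod_cast hk
  have hm1 : (1:ℝ) ≤ m := by exact_mod_cast hm
  rcases lt_or_gt_of_ne hne with h | h
  · have h1 : (k:ℝ) + 1 ≤ m := by exact_mod_cast h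
    have := Real.log_le_sub_one_of_pos (div_pos hk0 hm0)
    refine le_trans ?_ (neg_le_abs _)
    have h2 : (k:ℝ)/m ≤ 1 - 1/m := by
      rw [div_le_iff₀ hm0]; field_simp; linarith
    have h3 : 1 / (2 * m : ℝ) ≤ 1 / m := by
      apply one_div_le_one_div_of_le hm0; linarith
    linarith
  · have h1 : (m:ℝ) + 1 ≤ k := by exact_mod_cast h
    have := Real.one_sub_inv_le_log_of_pos (div_pos hk0 hm0)
    refine le_trans ?_ (le_abs_self _)
    refine le_trans ?_ this
    rw [inv_div]
    have : (m:ℝ)/k ≤ 1 - 1/(2*m) := by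
      rw [div_le_iff₀ hk0]
      have h3 : 1/(2*m:ℝ) ≤ 1/2 := by
        apply one_div_le_one_div_of_le <;> linarith
      have h4 : (m:ℝ) * (1/(2*m:ℝ)) = 1/2 := by field_simp
      nlinarith
    linarith

def IsSol {n : ℕ} (a : Fin n → ℝ) (m : ℕ) (k : Fin n → ℕ) (α : ℝ) : Prop :=
  3 * (n : ℝ) + 4 < α ∧ (∀ i, 1 ≤ k i) ∧
    ((⌊(m : ℝ) ^ α⌋ : ℤ) : ℝ) = ∑ i, a i * ((⌊(k i : ℝ) ^ α⌋ : ℤ) : ℝ) ∧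
    ¬ (∑ i, a i = 1 ∧ ∀ i, ⌊(k i : ℝ) ^ α⌋ = ⌊(m : ℝ) ^ α⌋)

lemma floor_pos_aux (k : ℕ) (hk : 1 ≤ k) (α : ℝ) (hα : 0 ≤ α) : (1:ℝ) ≤ ((⌊(k : ℝ) ^ α⌋ : ℤ) : ℝ) := by
  have h : (1:ℝ) ≤ (k:ℝ)^α := Real.one_le_rpow (by exact_mod_cast hk) hα
  have : (1:ℤ) ≤ ⌊(k : ℝ) ^ α⌋ := Int.le_floor.2 (by simpa using h)
  exact_mod_cast this

/-- closeness -/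
lemma close_aux {n : ℕ} (a : Fin n → ℝ) (ha : ∀ i, 0 < a i) (m : ℕ) (hm : 1 ≤ m)
    (k : Fin n → ℕ) (α : ℝ) (h : IsSol a m k α) :
    |∑ i, a i * Real.exp (Real.log ((k i : ℝ) / m) * α) - 1|
      ≤ (1 + ∑ i, a i) / (m : ℝ) ^ (3 * n + 4) := by
  obtain ⟨hα, hk, he, -⟩ := h
  have hm0 : (0:ℝ) < m := by exact_mod_cast hm
  have hm1 : (1:ℝ) ≤ m := by exact_mod_cast hm
  have hmα : (0:ℝ) < (m:ℝ)^α := Real.rpow_pos_of_pos hm0 _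
  have hC : 0 ≤ ∑ i, a i := Finset.sum_nonneg fun i _ => (ha i).le
  have e1 : ∑ i, a i * Real.exp (Real.log ((k i : ℝ) / m) * α) - 1
      = (∑ i, a i * (k i : ℝ)^α - (m:ℝ)^α) / (m:ℝ)^α := by
    rw [sub_div, div_self hmα.ne', Finset.sum_div]
    congr 1
    refine Finset.sum_congr rfl fun i _ => ?_
    have hk0 : (0:ℝ) < k i := by exact_mod_cast hk i
    rw [← Real.rpow_def_of_pos (div_pos hk0 hm0), Real.div_rpow hk0.le hm0.le]
    ring
  rw [e1, abs_div, abs_of_pos hmα]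
  have h1 : (m:ℝ) ^ (3 * n + 4) ≤ (m:ℝ)^α := by
    rw [← Real.rpow_natCast]
    apply Real.rpow_le_rpow_of_exponent_le hm1
    push_cast; linarith
  have h2 : |∑ i, a i * (k i : ℝ)^α - (m:ℝ)^α| ≤ 1 + ∑ i, a i := by
    have l1 := Int.floor_le ((m:ℝ)^α)
    have l2 := Int.lt_floor_add_one ((m:ℝ)^α)
    have l3 : ∑ i, a i * ((⌊(k i : ℝ) ^ α⌋ : ℤ) : ℝ) ≤ ∑ i, a i * (k i : ℝ)^α :=
      Finset.sum_le_sum fun i _ => mul_le_mul_of_nonneg_left (Int.floor_le _) (ha i).le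
    have l4 : ∑ i, a i * (k i : ℝ)^α ≤ ∑ i, a i * ((⌊(k i : ℝ) ^ α⌋ : ℤ) : ℝ) + ∑ i, a i := by
      rw [← Finset.sum_add_distrib]
      refine Finset.sum_le_sum fun i _ => ?_
      have := mul_le_mul_of_nonneg_left (Int.lt_floor_add_one ((k i : ℝ)^α)).le (ha i).le
      linarith
    rw [abs_le]; constructor <;> linarith
  exact div_le_div₀ (by linarith) h2 (by positivity) h1

lemma big_aux {n : ℕ} (hn : 1 ≤ n) (a : Fin n → ℝ) (ha : ∀ i, 0 < a i) (c₀ ε : ℝ)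
    (hc₀ : ∀ J : Finset (Fin n), ∑ i ∈ J, a i < 1 → c₀ ≤ 1 - ∑ i ∈ J, a i)
    (hε : ε < c₀ / 2) (hc0 : 0 < c₀)
    (m : ℕ) (hm : 1 ≤ m) (k : Fin n → ℕ) (α : ℝ) (h : IsSol a m k α)
    (hcl : |∑ i, a i * Real.exp (Real.log ((k i : ℝ) / m) * α) - 1| ≤ ε) :
    ∃ i, k i ≠ m ∧ c₀ / (2 * n) ≤ a i * Real.exp (Real.log ((k i : ℝ) / m) * α) := by
  obtain ⟨hα, hk, he, hnt⟩ := h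
  have hm0 : (0:ℝ) < m := by exact_mod_cast hm
  have hn0 : (0:ℝ) < n := by exact_mod_cast hn
  have hα0 : 0 ≤ α := by linarith
  set J := Finset.univ.filter (fun i => k i = m) with hJ
  set R := Finset.univ.filter (fun i => ¬ k i = m) with hR
  have hy := floor_pos_aux m hm α hα0
  have hs : ∑ i ∈ J, a i < 1 := by
    by_contra hs
    push Not at hs
    rw [← Finset.sum_filter_add_sum_filter_not Finset.univ (fun i => k i = m)] at he
    have e1 : ∑ i ∈ J, a i * ((⌊(k i : ℝ) ^ α⌋ : ℤ) : ℝ) = (∑ i ∈ J, a i) * ((⌊(m : ℝ) ^ α⌋ : ℤ) : ℝ) := by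
      rw [Finset.sum_mul]
      refine Finset.sum_congr rfl fun i hi => ?_
      rw [(Finset.mem_filter.1 hi).2]
    rw [e1] at he
    have hpos : ∀ i ∈ R, 0 < a i * ((⌊(k i : ℝ) ^ α⌋ : ℤ) : ℝ) := fun i _ =>
      mul_pos (ha i) (by linarith [floor_pos_aux (k i) (hk i) α hα0])
    have hge : 1 * ((⌊(m : ℝ) ^ α⌋ : ℤ) : ℝ) ≤ (∑ i ∈ J, a i) * ((⌊(m : ℝ) ^ α⌋ : ℤ) : ℝ) :=
      mul_le_mul_of_nonneg_right hs (by linarith)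
    rcases R.eq_empty_or_nonempty with h0 | h0
    · have hall : ∀ i, k i = m := by
        intro i
        by_contra hi
        have : i ∈ R := Finset.mem_filter.2 ⟨Finset.mem_univ _, hi⟩
        rw [h0] at this
        simp at this
      have hJu : J = Finset.univ := Finset.filter_true_of_mem fun i _ => hall i
      rw [← hR, h0, Finset.sum_empty, add_zero, hJu] at he
      apply hnt
      constructor
      · have : (∑ i, a i - 1) * ((⌊(m : ℝ) ^ α⌋ : ℤ) : ℝ) = 0 := by linarith
        rcases mul_eq_zero.1 this with h | h <;> linarith
      · intro i; rw [hall i]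
    · have := Finset.sum_pos hpos h0
      linarith
  have h1 := hc₀ J hs
  rw [← Finset.sum_filter_add_sum_filter_not Finset.univ (fun i => k i = m)] at hcl
  have e1 : ∑ i ∈ J, a i * Real.exp (Real.log ((k i : ℝ) / m) * α) = ∑ i ∈ J, a i := by
    refine Finset.sum_congr rfl fun i hi => ?_
    rw [(Finset.mem_filter.1 hi).2, div_self hm0.ne']; simp
  rw [e1] at hcl
  have h2 := (abs_le.1 hcl).1
  by_contra hcon
  push Not at hcon
  have h3 : ∑ i ∈ R, a i * Real.exp (Real.log ((k i : ℝ) / m) * α) ≤ ∑ i ∈ R, c₀ / (2 * n) :=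
    Finset.sum_le_sum fun i hi => (hcon i (Finset.mem_filter.1 hi).2).le
  rw [Finset.sum_const, nsmul_eq_mul] at h3
  have h4 : (R.card : ℝ) ≤ n := by
    have := Finset.card_le_univ R
    rw [Fintype.card_fin] at this
    exact_mod_cast this
  have h5 : (R.card : ℝ) * (c₀ / (2 * n)) ≤ n * (c₀ / (2 * n)) :=
    mul_le_mul_of_nonneg_right h4 (by positivity)
  have h6 : n * (c₀ / (2 * n)) = c₀ / 2 := by field_simp
  linarith

lemma box_aux {n : ℕ} (a : Fin n → ℝ) (ha : ∀ i, 0 < a i) (K : ℕ) (hK : ∀ i, 2 / a i ≤ K)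
    (hK1 : 1 ≤ K) (ε : ℝ) (hε : ε ≤ 1)
    (m : ℕ) (hm : 1 ≤ m) (k : Fin n → ℕ) (α : ℝ) (h : IsSol a m k α)
    (hcl : |∑ i, a i * Real.exp (Real.log ((k i : ℝ) / m) * α) - 1| ≤ ε) (i : Fin n) :
    k i ≤ K * m := by
  obtain ⟨hα, hk, he, hnt⟩ := h
  have hm0 : (0:ℝ) < m := by exact_mod_cast hm
  have hk0 : (0:ℝ) < k i := by exact_mod_cast hk i
  have hα1 : 1 ≤ α := by have : (0:ℝ) ≤ n := n.cast_nonneg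
                         linarith
  have h1 := Finset.single_le_sum
      (f := fun i => a i * Real.exp (Real.log ((k i : ℝ) / m) * α)) (s := Finset.univ)
      (fun j _ => (mul_nonneg (ha j).le (Real.exp_pos _).le)) (Finset.mem_univ i)
  have h2 := (abs_le.1 hcl).2
  by_contra hcon
  push Not at hcon
  have h3 : (K : ℝ) < k i / m := by
    rw [lt_div_iff₀ hm0]; exact_mod_cast hcon
  have hK1' : (1:ℝ) ≤ K := by exact_mod_cast hK1
  have h4 : (k i / m : ℝ) ≤ (k i / m : ℝ) ^ α := Real.self_le_rpow_of_one_le (by linarith) hα1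
  rw [← Real.rpow_def_of_pos (div_pos hk0 hm0)] at h1
  have h5 := hK i
  have h6 : 2 / a i < (k i / m : ℝ) ^ α := by linarith
  rw [div_lt_iff₀ (ha i)] at h6
  linarith

lemma key_aux (n : ℕ) (hn : 1 ≤ n) (a : Fin n → ℝ) (ha : ∀ i, 0 < a i) :
    ∃ (E : ℝ) (M : ℕ), ∀ m ≥ M,
      volume {α : ℝ | ∃ k, IsSol a m k α} ≤ ENNReal.ofReal (E / (m : ℝ) ^ (3/2 : ℝ)) := by
  set C := 1 + ∑ i, a i with hCdef
  have hC : 0 < C := by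
    have : 0 ≤ ∑ i, a i := Finset.sum_nonneg fun i _ => (ha i).le
    linarith
  have hn0 : (0:ℝ) < n := by exact_mod_cast hn
  obtain ⟨c₀, hc0, hc₀⟩ : ∃ c₀ : ℝ, 0 < c₀ ∧
      ∀ J : Finset (Fin n), ∑ i ∈ J, a i < 1 → c₀ ≤ 1 - ∑ i ∈ J, a i := by
    obtain ⟨J0, hJ0⟩ := Finite.exists_min
      (fun J : Finset (Fin n) => if ∑ i ∈ J, a i < 1 then 1 - ∑ i ∈ J, a i else 1)
    refine ⟨_, ?_, fun J hJ => (hJ0 J).trans ?_⟩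
    · split_ifs <;> linarith
    · rw [if_pos hJ]
  obtain ⟨K, hK1, hK⟩ : ∃ K : ℕ, 1 ≤ K ∧ ∀ i, 2 / a i ≤ K := by
    refine ⟨⌈∑ i, 2 / a i⌉₊ + 1, by omega, fun i => ?_⟩
    have h1 := Finset.single_le_sum (f := fun i => 2 / a i) (s := Finset.univ)
      (fun j _ => (div_pos two_pos (ha j)).le) (Finset.mem_univ i)
    have h2 := Nat.le_ceil (∑ i, 2 / a i)
    push_cast
    linarith
  set c := c₀ / (2 * n) with hc
  have hcpos : 0 < c := by positivity
  obtain ⟨M, hM⟩ := exists_nat_gt (C / (c₀/2) + 8 * C / c + C)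
  refine ⟨2 * K ^ n * Real.sqrt (32 * C / c), M + 1, fun m hmM => ?_⟩
  have hm : 1 ≤ m := by omega
  have hm0 : (0:ℝ) < m := by exact_mod_cast hm
  have hm1 : (1:ℝ) ≤ m := by exact_mod_cast hm
  have hmM' : (M:ℝ) ≤ m := by exact_mod_cast (by omega : M ≤ m)
  have p1 : 0 < C / (c₀/2) := by positivity
  have p2 : 0 < 8 * C / c := by positivity
  set ε := C / (m:ℝ) ^ (3 * n + 4) with hεdef
  have hεm : ε ≤ C / m := by
    apply div_le_div_of_nonneg_left hC.le hm0
    exact le_self_pow₀ hm1 (by omega)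
  have hε1 : ε ≤ 1 := hεm.trans (by rw [div_le_one hm0]; linarith)
  have hε2 : ε < c₀ / 2 := hεm.trans_lt (by
    rw [div_lt_comm₀ hm0 (by positivity)]; linarith)
  have hε3 : 8 * ε < c := by
    have : 8 * C / m < c := by rw [div_lt_comm₀ hm0 hcpos]; linarith
    have e : 8 * C / m = 8 * (C / m) := by ring
    linarith
  have hεpos : 0 < ε := by positivity
  set D := Real.sqrt (32 * C / c) / ((m:ℝ) ^ n * (m:ℝ) ^ (3/2 : ℝ)) with hD
  have hDpos : 0 ≤ D := by positivity
  have hsub : {α : ℝ | ∃ k, IsSol a m k α} ⊆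
      ⋃ k ∈ Fintype.piFinset (fun _ : Fin n => Finset.Icc 1 (K * m)), {α | IsSol a m k α} := by
    rintro α ⟨k, hk⟩
    simp only [Set.mem_iUnion]
    refine ⟨k, ?_, hk⟩
    rw [Fintype.mem_piFinset]
    intro i
    rw [Finset.mem_Icc]
    exact ⟨hk.2.1 i, box_aux a ha K hK hK1 ε hε1 m hm k α hk (close_aux a ha m hm k α hk) i⟩
  have hone : ∀ k, volume {α | IsSol a m k α} ≤ ENNReal.ofReal D + ENNReal.ofReal D := by
    intro k
    refine diam_aux _ (fun p => ∑ i, a i * Real.log ((k i : ℝ) / m) * Real.exp (Real.log ((k i : ℝ) / m) * p)) D ?_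
    intro p hp q hq hpq
    have hp' := close_aux a ha m hm k p hp
    have hq' := close_aux a ha m hm k q hq
    obtain ⟨i, him, hi⟩ := big_aux hn a ha c₀ ε hc₀ hε2 hc0 m hm k p hp hp'
    have h1 := sep_aux a (fun i => Real.log ((k i : ℝ) / m)) ha p q ε c hp' hq' hpq i hcpos hi hε3
    have h2 := log_aux (k i) m (hp.2.1 i) hm him
    have h3 : (1 / (2 * m : ℝ) * |q - p|) ^ 2 ≤ 8 * ε / c := by
      refine le_trans ?_ h1
      rw [← sq_abs (Real.log _ * _), abs_mul]
      gcongr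
    have h4 : |q - p| ^ 2 ≤ D ^ 2 := by
      have e1 : |q - p| ^ 2 = (1 / (2 * m : ℝ) * |q - p|) ^ 2 * (4 * m ^ 2) := by
        field_simp; norm_num
      have e2 : D ^ 2 = (32 * C / c) / (m:ℝ) ^ (2 * n + 3) := by
        rw [hD, div_pow, Real.sq_sqrt (by positivity), mul_pow]
        congr 1
        rw [← Real.rpow_natCast ((m:ℝ)^(3/2:ℝ)), ← Real.rpow_mul hm0.le, pow_add, ← pow_mul, mul_comm n 2]
        congr 1
        rw [← Real.rpow_natCast]
        norm_num
      rw [e1, e2]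
      calc _ ≤ 8 * ε / c * (4 * m ^ 2) := by gcongr
        _ = (32 * C / c) / (m:ℝ) ^ (3 * n + 2) := by
          rw [hεdef, show 3 * n + 4 = (3 * n + 2) + 2 by ring, pow_add _ (3 * n + 2)]
          field_simp; norm_num
        _ ≤ _ := by
          apply div_le_div_of_nonneg_left (by positivity) (by positivity)
          exact pow_le_pow_right₀ hm1 (by omega)
    exact le_of_sq_le_sq h4 hDpos
  calc _ ≤ _ := measure_mono hsub
    _ ≤ ∑ k ∈ Fintype.piFinset (fun _ : Fin n => Finset.Icc 1 (K * m)), volume {α | IsSol a m k α} :=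
      measure_biUnion_finset_le _ _
    _ ≤ ∑ k ∈ Fintype.piFinset (fun _ : Fin n => Finset.Icc 1 (K * m)), ENNReal.ofReal (2 * D) := by
      refine Finset.sum_le_sum fun k _ => (hone k).trans ?_
      rw [← ENNReal.ofReal_add hDpos hDpos, two_mul]
    _ = ENNReal.ofReal ((K * m : ℝ) ^ n * (2 * D)) := by
      rw [Finset.sum_const, Fintype.card_piFinset, nsmul_eq_mul,
        ENNReal.ofReal_mul (p := (K * m : ℝ) ^ n) (by positivity)]
      congr 1
      simp only [Nat.card_Icc, Finset.prod_const, Finset.card_univ, Fintype.card_fin, Nat.add_sub_cancel]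
      rw [← ENNReal.ofReal_natCast]
      push_cast
      rfl
    _ = _ := by
      congr 1
      rw [hD, mul_pow]
      field_simp

/-- main -/
theorem statement5 (n : ℕ) (hn : 1 ≤ n) (a : Fin n → ℝ) (ha : ∀ i, 0 < a i) :
    volume {α : ℝ | 3 * (n : ℝ) + 4 < α ∧
      {sol : ℤ × (Fin n → ℤ) |
        sol.1 ∈ PS α ∧ (∀ i, sol.2 i ∈ PS α) ∧
        (sol.1 : ℝ) = ∑ i, a i * (sol.2 i : ℝ) ∧
        ¬(∑ i, a i = 1 ∧ ∀ i, sol.2 i = sol.1)}.Infinite} = 0 := by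
  obtain ⟨E, M, hM⟩ := key_aux n hn a ha
  have hsum : Summable fun m : ℕ => |E| / (((m + M : ℕ)) : ℝ) ^ (3/2 : ℝ) := by
    have h0 : Summable fun m : ℕ => 1 / (m : ℝ) ^ (3/2 : ℝ) :=
      Real.summable_one_div_nat_rpow.2 (by norm_num)
    have h1 := (summable_nat_add_iff M).2 h0
    refine (h1.mul_left |E|).congr fun m => ?_
    rw [mul_one_div]
  have hBC : volume {α : ℝ | ∃ᶠ m : ℕ in Filter.atTop, α ∈ {α : ℝ | ∃ k, IsSol a (m + M) k α}} = 0 := by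
    refine measure_setOf_frequently_eq_zero ?_
    refine ne_top_of_le_ne_top hsum.tsum_ofReal_ne_top (ENNReal.tsum_le_tsum fun m => ?_)
    refine (hM (m + M) (by omega)).trans (ENNReal.ofReal_le_ofReal ?_)
    gcongr
    exact le_abs_self _
  refine measure_mono_null ?_ hBC
  rintro α ⟨hα, hinf⟩
  by_contra hcon
  apply hinf
  simp only [Set.mem_ofPred_eq, Filter.not_frequently, Filter.eventually_atTop] at hcon
  obtain ⟨N, hN⟩ := hcon
  have hα0 : 0 ≤ α := by have : (0:ℝ) ≤ n := n.cast_nonneg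
                         linarith
  have hpos : ∀ x ∈ PS α, 1 ≤ x := by
    rintro x ⟨j, hj, rfl⟩
    exact_mod_cast floor_pos_aux j hj α hα0
  have hfin : ({y : ℤ | ∃ m < N + M, y = ⌊(m : ℝ) ^ α⌋}).Finite := by
    refine ((Set.finite_lt_nat (N + M)).image (fun m : ℕ => ⌊(m : ℝ) ^ α⌋)).subset ?_
    rintro y ⟨m, hm, rfl⟩
    exact ⟨m, hm, rfl⟩
  refine (hfin.biUnion (t := fun y => ({y} : Set ℤ) ×ˢ (Set.univ.pi fun i : Fin n => Set.Icc (1:ℤ) ⌈(y:ℝ) / a i⌉))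
    fun y _ => (Set.finite_singleton y).prod (Set.Finite.pi fun i => Set.finite_Icc _ _)).subset ?_
  rintro ⟨y, x⟩ ⟨hy, hx, he, hnt⟩
  simp only at hy hx he hnt
  obtain ⟨m, hm1, hm⟩ := hy
  choose k hk1 hk using hx
  simp only [Set.mem_iUnion]
  refine ⟨y, ⟨m, ?_, hm⟩, rfl, ?_⟩
  · by_contra hlt
    push Not at hlt
    refine hN (m - M) (by omega) ⟨k, ?_⟩
    rw [show m - M + M = m by omega]
    refine ⟨hα, hk1, ?_, ?_⟩
    · rw [← hm, he]; exact Finset.sum_congr rfl fun i _ => by rw [hk i]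
    · rintro ⟨h1, h2⟩
      exact hnt ⟨h1, fun i => by rw [hk i, h2 i, hm]⟩
  · intro i _
    have hxp : ∀ j, 1 ≤ x j := fun j => hpos _ ⟨k j, hk1 j, hk j⟩
    refine ⟨hxp i, ?_⟩
    have h1 := Finset.single_le_sum (f := fun i => a i * (x i : ℝ)) (s := Finset.univ)
      (fun j _ => mul_nonneg (ha j).le (by have := hxp j; exact_mod_cast (by omega : 0 ≤ x j)))
      (Finset.mem_univ i)
    rw [← he] at h1
    have h2 : (x i : ℝ) ≤ (y:ℝ) / a i := by
      rw [le_div_iff₀ (ha i), mul_comm]; exact h1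
    exact_mod_cast h2.trans (Int.le_ceil _)
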